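/- arXiv:2511.03618 — 2 statements merged into one kernel-verified Lean document; each statement's English description precedes it below -/
import Mathlib

section
/- Let S be a nonempty finite type and P a row-stochastic matrix on S that is irreducible and aperiodic, with (unique) stationary distribution μ. Then P mixes geometrically: there exist constants C ≥ 0 and ρ ∈ [0,1) such that for all n ∈ ℕ and all states i, ∑ j, |(P^n) i j − μ j| ≤ C · ρ^n. -/
/-!
Doeblin's argument, in the `ℓ^∞`-operator norm (the largest `ℓ¹` norm of a row). The times `n` with
`0 < (P ^ n) j j` form an additive submonoid of `ℕ`; aperiodicity at `j` gives it gcd `1`, so it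
contains all large integers. If moreover `j` can be reached from every state, then for some `m` the
whole column `j` of `P ^ m` is at least some `ε > 0`. Subtracting `ε` from that column does not
change `A * P ^ m` when the rows of `A` sum to zero, and leaves rows of `ℓ¹` norm `1 - ε`. With
`Π` the matrix all of whose rows are `μ`, stationarity gives
`P ^ (n + m) - Π = (P ^ n - Π) * P ^ m`, so the distance to `Π` shrinks by the factor `1 - ε` every
`m` steps.
-/

open Finset

/-- The set of return times of state `i` under the stochastic matrix `P`. -/
def returnTimes {S : Type*} [Fintype S] [DecidableEq S] (P : Matrix S S ℝ) (i : S) : Set ℕ :=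
  {n | 1 ≤ n ∧ 0 < (P ^ n) i i}

section Positivity

open Filter

variable {R : Type*} [Semiring R] [PartialOrder R] [IsStrictOrderedRing R]

lemma matrix_mul_apply_pos {l m n : Type*} [Fintype m] {A : Matrix l m R} {B : Matrix m n R}
    (hA : ∀ i j, 0 ≤ A i j) (hB : ∀ i j, 0 ≤ B i j) {i : l} {j : m} {k : n}
    (hij : 0 < A i j) (hjk : 0 < B j k) : 0 < (A * B) i k := by
  rw [Matrix.mul_apply]
  exact sum_pos' (fun x _ ↦ mul_nonneg (hA i x) (hB x k)) ⟨j, mem_univ j, mul_pos hij hjk⟩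

variable {S : Type*} [Fintype S] [DecidableEq S]

lemma matrix_pow_add_apply_pos {P : Matrix S S R} (hP : ∀ i j, 0 ≤ P i j) {a b : ℕ}
    {i j k : S} (hij : 0 < (P ^ a) i j) (hjk : 0 < (P ^ b) j k) : 0 < (P ^ (a + b)) i k := by
  rw [pow_add]
  exact matrix_mul_apply_pos (Matrix.pow_apply_nonneg hP a) (Matrix.pow_apply_nonneg hP b) hij hjk

variable {P : Matrix S S ℝ}

lemma eventually_pow_apply_self_pos (hP : ∀ i j, 0 ≤ P i j) {i : S}
    (haper : ∀ d : ℕ, (∀ n ∈ returnTimes P i, d ∣ n) → d = 1) :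
    ∀ᶠ n in atTop, 0 < (P ^ n) i i := by
  have hgcd : Nat.setGcd (returnTimes P i) = 1 :=
    haper _ fun _ hn ↦ Nat.setGcd_dvd_of_mem hn
  have pos_of_mem_closure : ∀ n ∈ AddSubmonoid.closure (returnTimes P i), 0 < (P ^ n) i i := by
    intro n hn
    induction hn using AddSubmonoid.closure_induction with
    | mem n hn => exact hn.2
    | zero => simp
    | add a b _ _ ha hb => exact matrix_pow_add_apply_pos hP ha hb
  obtain ⟨N, hN⟩ := Nat.exists_mem_closure_of_ge (returnTimes P i)
  filter_upwards [eventually_ge_atTop N] with n hn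
  exact pos_of_mem_closure n (hN n hn (hgcd ▸ one_dvd n))

lemma eventually_forall_pow_apply_pos (hP : ∀ i j, 0 ≤ P i j) {j : S}
    (hreach : ∀ i, ∃ n : ℕ, 0 < (P ^ n) i j)
    (haper : ∀ d : ℕ, (∀ n ∈ returnTimes P j, d ∣ n) → d = 1) :
    ∀ᶠ n in atTop, ∀ i, 0 < (P ^ n) i j := by
  refine eventually_all.2 fun i ↦ ?_
  obtain ⟨k, hk⟩ := hreach i
  filter_upwards [(tendsto_sub_atTop_nat k).eventually (eventually_pow_apply_self_pos hP haper),
    eventually_ge_atTop k] with n hn hkn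
  simpa only [Nat.add_sub_cancel' hkn] using matrix_pow_add_apply_pos hP hk hn

end Positivity

lemma exists_le_mul_pow_of_add_le_mul {a : ℕ → ℝ} (ha : ∀ n, 0 ≤ a n) {m : ℕ} (hm : m ≠ 0) {r : ℝ}
    (hr : r < 1) (hstep : ∀ n, a (n + m) ≤ r * a n) :
    ∃ C ρ : ℝ, 0 ≤ C ∧ 0 ≤ ρ ∧ ρ < 1 ∧ ∀ n, a n ≤ C * ρ ^ n := by
  wlog hr0 : 0 < r generalizing r
  · exact this (r := 1 / 2) (by norm_num)
      (fun n ↦ (hstep n).trans (mul_le_mul_of_nonneg_right (by linarith) (ha n))) (by norm_num)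
  obtain ⟨ρ, hρ0, hρ1, hρm⟩ : ∃ ρ : ℝ, 0 ≤ ρ ∧ ρ < 1 ∧ ρ ^ m = r :=
    ⟨r ^ (m : ℝ)⁻¹, by positivity, Real.rpow_lt_one hr0.le hr (by positivity),
      Real.rpow_inv_natCast_pow hr0.le hm⟩
  obtain ⟨B, hB, haB⟩ : ∃ B, 0 ≤ B ∧ ∀ n < m, a n ≤ B :=
    ⟨∑ k ∈ range m, a k, sum_nonneg fun k _ ↦ ha k,
      fun n hn ↦ single_le_sum (fun k _ ↦ ha k) (mem_range.2 hn)⟩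
  refine ⟨B / r, ρ, by positivity, hρ0, hρ1, fun n ↦ ?_⟩
  induction n using Nat.strong_induction_on with
  | _ n ih =>
    obtain hn | hn := lt_or_ge n m
    · calc a n ≤ B := haB n hn
        _ = B / r * ρ ^ m := by rw [hρm, div_mul_cancel₀ _ hr0.ne']
        _ ≤ B / r * ρ ^ n := by
            gcongr ?_ * ?_
            exact pow_le_pow_of_le_one hρ0 hρ1.le hn.le
    · obtain ⟨t, rfl⟩ := Nat.exists_eq_add_of_le' hn
      calc a (t + m) ≤ r * a t := hstep t
        _ ≤ r * (B / r * ρ ^ t) := by gcongr; exact ih t (by omega)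
        _ = B / r * ρ ^ (t + m) := by rw [pow_add, hρm]; ring

section Contraction

open Matrix
open scoped Matrix.Norms.Operator

variable {l m n : Type*} [Fintype l] [Fintype m] [Fintype n]

lemma sum_norm_row_le_linfty_opNorm {α : Type*} [SeminormedAddCommGroup α] (A : Matrix m n α)
    (i : m) : ∑ j, ‖A i j‖ ≤ ‖A‖ := by
  simp_rw [linfty_opNorm_def, ← coe_nnnorm, ← NNReal.coe_sum, NNReal.coe_le_coe]
  exact le_sup (f := fun i ↦ ∑ j, ‖A i j‖₊) (mem_univ i)

lemma linfty_opNorm_eq_of_forall_sum_norm_row_eq {α : Type*} [SeminormedAddCommGroup α]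
    [Nonempty m] {A : Matrix m n α} {c : ℝ} (hA : ∀ i, ∑ j, ‖A i j‖ = c) : ‖A‖ = c := by
  obtain ⟨i⟩ := ‹Nonempty m›
  have hrow (k : m) : ∑ j, ‖A k j‖₊ = ∑ j, ‖A i j‖₊ := by
    apply NNReal.eq
    simp_rw [NNReal.coe_sum, coe_nnnorm, hA]
  rw [linfty_opNorm_def]
  simp_rw [hrow, sup_const ⟨i, mem_univ i⟩, NNReal.coe_sum, coe_nnnorm, hA]

lemma linfty_opNorm_mul_le_of_le_row {A : Matrix l m ℝ} {Q : Matrix m n ℝ} {ν : n → ℝ}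
    (hA : A *ᵥ 1 = 0) (hQ : ∀ i, ∑ j, Q i j = 1) (hν : ∀ i j, ν j ≤ Q i j) :
    ‖A * Q‖ ≤ (1 - ∑ j, ν j) * ‖A‖ := by
  cases isEmpty_or_nonempty m
  · simp [Subsingleton.elim A 0]
  have hA_mul : A * replicateRow m ν = 0 := by
    ext i j
    have hAi : ∑ k, A i k = 0 := by simpa [mulVec, dotProduct] using congrFun hA i
    simp [mul_apply, ← sum_mul, hAi]
  have hQ_norm : ‖Q - replicateRow m ν‖ = 1 - ∑ j, ν j := by
    refine linfty_opNorm_eq_of_forall_sum_norm_row_eq fun i ↦ ?_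
    simp_rw [Matrix.sub_apply, replicateRow_apply,
      Real.norm_of_nonneg (sub_nonneg.2 (hν i _)), sum_sub_distrib, hQ]
  calc ‖A * Q‖ = ‖A * (Q - replicateRow m ν)‖ := by rw [Matrix.mul_sub, hA_mul, sub_zero]
    _ ≤ ‖A‖ * ‖Q - replicateRow m ν‖ := linfty_opNorm_mul _ _
    _ = (1 - ∑ j, ν j) * ‖A‖ := by rw [hQ_norm, mul_comm]

lemma norm_pow_add_sub_replicateRow_le [DecidableEq n] {P : Matrix n n ℝ}
    (hP : P ∈ rowStochastic ℝ n) {μ : n → ℝ} (hμsum : ∑ j, μ j = 1)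
    (hμstat : μ ᵥ* P = μ) {k : ℕ} {j : n} {ε : ℝ} (hε : ∀ i, ε ≤ (P ^ k) i j) (t : ℕ) :
    ‖P ^ (t + k) - replicateRow n μ‖ ≤ (1 - ε) * ‖P ^ t - replicateRow n μ‖ := by
  have hpow (s : ℕ) : P ^ s ∈ rowStochastic ℝ n := pow_mem hP s
  have hzero : (P ^ t - replicateRow n μ) *ᵥ 1 = 0 := by
    rw [sub_mulVec, (hpow t).2]
    ext i
    simp [mulVec, dotProduct, hμsum]
  have hstat : SemiconjBy (replicateRow n μ) P 1 := by
    rw [SemiconjBy, one_mul, ← replicateRow_vecMul, hμstat]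
  have hle (i j' : n) : (Pi.single j ε : n → ℝ) j' ≤ (P ^ k) i j' := by
    obtain rfl | hj := eq_or_ne j' j
    · simpa using hε i
    · simpa [hj] using nonneg_of_mem_rowStochastic (hpow k)
  calc ‖P ^ (t + k) - replicateRow n μ‖
      = ‖(P ^ t - replicateRow n μ) * P ^ k‖ := by
        rw [sub_mul, (hstat.pow_right k).eq, one_pow, one_mul, pow_add]
    _ ≤ (1 - ∑ j', (Pi.single j ε : n → ℝ) j') * ‖P ^ t - replicateRow n μ‖ :=
        linfty_opNorm_mul_le_of_le_row hzero (sum_row_of_mem_rowStochastic (hpow k)) hle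
    _ = (1 - ε) * ‖P ^ t - replicateRow n μ‖ := by rw [Fintype.sum_pi_single' j ε]

theorem geometric_mixing_of_irreducible_aperiodic_general
    {S : Type*} [Fintype S] [DecidableEq S] {P : Matrix S S ℝ}
    (hP : P ∈ rowStochastic ℝ S) {j₀ : S}
    (hreach : ∀ i, ∃ n : ℕ, 0 < (P ^ n) i j₀)
    (haper : ∀ d : ℕ, (∀ n ∈ returnTimes P j₀, d ∣ n) → d = 1)
    {μ : S → ℝ} (hμsum : ∑ s, μ s = 1) (hμstat : μ ᵥ* P = μ) :
    ∃ (C ρ : ℝ), 0 ≤ C ∧ 0 ≤ ρ ∧ ρ < 1 ∧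
      ∀ (n : ℕ) (i : S), ∑ j, |(P ^ n) i j - μ j| ≤ C * ρ ^ n := by
  have : Nonempty S := ⟨j₀⟩
  obtain ⟨m, hpos, hm⟩ := ((eventually_forall_pow_apply_pos hP.1 hreach haper).and
    (Filter.eventually_ne_atTop 0)).exists
  obtain ⟨i₀, hmin⟩ := Finite.exists_min fun i ↦ (P ^ m) i j₀
  obtain ⟨C, ρ, hC, hρ0, hρ1, hbound⟩ := exists_le_mul_pow_of_add_le_mul
    (fun n ↦ norm_nonneg (P ^ n - replicateRow S μ)) hm (sub_lt_self 1 (hpos i₀))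
    (norm_pow_add_sub_replicateRow_le hP hμsum hμstat hmin)
  exact ⟨C, ρ, hC, hρ0, hρ1, fun n i ↦
    (sum_norm_row_le_linfty_opNorm (P ^ n - replicateRow S μ) i).trans (hbound n)⟩

end Contraction

/-- An irreducible aperiodic row-stochastic matrix on a nonempty finite type mixes
geometrically towards its stationary distribution. -/
theorem geometric_mixing_of_irreducible_aperiodic
    {S : Type*} [Fintype S] [Nonempty S] [DecidableEq S] (P : Matrix S S ℝ)
    (hnonneg : ∀ i j, 0 ≤ P i j)
    (hrowsum : ∀ i, ∑ j, P i j = 1)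
    (hirr : ∀ i j, ∃ n : ℕ, 0 < (P ^ n) i j)
    (haper : ∀ i, ∀ d : ℕ, (∀ n ∈ returnTimes P i, d ∣ n) → d = 1)
    (μ : S → ℝ) (hμnonneg : ∀ s, 0 ≤ μ s) (hμsum : ∑ s, μ s = 1)
    (hμstat : ∀ j, ∑ i, μ i * P i j = μ j) :
    ∃ (C ρ : ℝ), 0 ≤ C ∧ 0 ≤ ρ ∧ ρ < 1 ∧
      ∀ (n : ℕ) (i : S), ∑ j, |(P ^ n) i j - μ j| ≤ C * ρ ^ n := by
  obtain ⟨j₀⟩ := ‹Nonempty S›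
  exact geometric_mixing_of_irreducible_aperiodic_general
    (Matrix.mem_rowStochastic_iff_sum.2 ⟨hnonneg, hrowsum⟩) (hirr · j₀) (haper j₀) hμsum
    (funext hμstat)
end

section
/- Let A = Xᵀ D_π (γP_π − I) X be the linear TD matrix associated with an irreducible aperiodic finite Markov chain P_π with stationary distribution d_π, full-column-rank feature matrix X, and discount γ ∈ [0,1); let b = Xᵀ D_π r_π and w* = −A⁻¹ b the TD fixed point. Define f(w) = A w + b + w. Then there exists η > 0 such that for all w ∈ ℝᴷ: ⟨∇(½‖w − w*‖₂²), f(w) − w⟩ = ⟨w − w*, A(w − w*)⟩ ≤ −η·‖w − w*‖₂², i.e., f satisfies the Lyapunov drift condition with the Lyapunov function φ(x) = ½‖x‖₂². -/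
/-!
In terms of `v = X u`, the quadratic form of `A` is `γ ⟨v, P v⟩_d - ⟨v, v⟩_d`. The matrix `D P`
has nonnegative entries and both of its marginals are `d` (rows because `P` is stochastic, columns
because `d` is stationary), so `2 |vᵢ vⱼ| ≤ vᵢ² + vⱼ²` summed against it gives
`|⟨v, P v⟩_d| ≤ ⟨v, v⟩_d`, and discounting makes `A` negative definite. Negative definiteness makes
`A` invertible, so that `f w - w = A (w - w*)`, and on the compact unit sphere the form of `A` is
bounded away from zero, which gives `η`.
-/

open Finset Matrix

section Excessive

variable {R S : Type*} [Semiring R] [PartialOrder R] [Fintype S] [DecidableEq S]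
  {P : Matrix S S R} {d : S → R}

lemma vecMul_pow_le [IsOrderedRing R] (hP : ∀ i j, 0 ≤ P i j) (hdP : d ᵥ* P ≤ d) (n : ℕ) :
    d ᵥ* P ^ n ≤ d := by
  induction n with
  | zero => simp
  | succ n ih =>
    calc d ᵥ* P ^ (n + 1) = (d ᵥ* P ^ n) ᵥ* P := by rw [pow_succ, vecMul_vecMul]
      _ ≤ d ᵥ* P := fun j => dotProduct_le_dotProduct_of_nonneg_right ih fun i => hP i j
      _ ≤ d := hdP

lemma pos_of_vecMul_le [IsStrictOrderedRing R] (hP : ∀ i j, 0 ≤ P i j)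
    (hirr : ∀ i j, ∃ n : ℕ, 0 < (P ^ n) i j) (hd : 0 ≤ d) (hd0 : d ≠ 0) (hdP : d ᵥ* P ≤ d)
    (j : S) : 0 < d j := by
  obtain ⟨i, hi⟩ := Function.ne_iff.1 hd0
  obtain ⟨n, hn⟩ := hirr i j
  calc 0 < d i * (P ^ n) i j := mul_pos ((hd i).lt_of_ne' hi) hn
    _ ≤ ∑ k, d k * (P ^ n) k j :=
      single_le_sum (f := fun k => d k * (P ^ n) k j)
        (fun k _ => mul_nonneg (hd k) (pow_apply_nonneg hP n k j)) (mem_univ i)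
    _ ≤ d j := vecMul_pow_le hP hdP n j

end Excessive

section NegDef

/-- Negative definiteness of the quadratic form `u ↦ uᵀ A u`. Unlike `(-A).PosDef`, this does not
ask `A` to be symmetric, which temporal-difference matrices are in general not. -/
def IsNegDef {R n : Type*} [Fintype n] [NonUnitalNonAssocSemiring R] [LT R] (A : Matrix n n R) :
    Prop :=
  ∀ u : n → R, u ≠ 0 → u ⬝ᵥ A *ᵥ u < 0

variable {n : Type*} [Fintype n]

lemma IsNegDef.isUnit {R : Type*} [Field R] [Preorder R] [DecidableEq n] {A : Matrix n n R}
    (hA : IsNegDef A) : IsUnit A := by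
  refine mulVec_injective_iff_isUnit.1 ((injective_iff_map_eq_zero A.mulVecLin).2 fun u hu => ?_)
  by_contra hu0
  have hneg := hA u hu0
  rw [← mulVecLin_apply, hu, dotProduct_zero] at hneg
  exact hneg.false

lemma IsNegDef.exists_dotProduct_mulVec_le_neg_mul {A : Matrix n n ℝ} (hA : IsNegDef A) :
    ∃ η > (0 : ℝ), ∀ u : n → ℝ, u ⬝ᵥ A *ᵥ u ≤ -η * (u ⬝ᵥ u) := by
  let q : EuclideanSpace ℝ n → ℝ := fun x => -(x.ofLp ⬝ᵥ A *ᵥ x.ofLp)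
  have hq : Continuous q := by fun_prop
  have hq_pos : ∀ x ∈ Metric.sphere (0 : EuclideanSpace ℝ n) 1, 0 < q x := fun x hx =>
    neg_pos.2 <| hA x.ofLp <| (WithLp.ofLp_eq_zero 2).not.2 (ne_zero_of_mem_unit_sphere ⟨x, hx⟩)
  obtain ⟨η, hη, hmin⟩ := (isCompact_sphere 0 1).exists_forall_le' hq.continuousOn hq_pos
  refine ⟨η, hη, fun u => ?_⟩
  rcases eq_or_ne u 0 with rfl | hu
  · simp
  let x : EuclideanSpace ℝ n := WithLp.toLp 2 u
  have hx : x ≠ 0 := (WithLp.toLp_eq_zero 2).not.2 hu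
  have hnorm : ‖x‖ ^ 2 = u ⬝ᵥ u := by
    rw [EuclideanSpace.real_norm_sq_eq, dotProduct]
    exact sum_congr rfl fun i _ => pow_two (u i)
  have hscale : q (‖x‖⁻¹ • x) = -(u ⬝ᵥ A *ᵥ u) / ‖x‖ ^ 2 := by
    simp only [q, x, WithLp.ofLp_smul, mulVec_smul, smul_dotProduct, dotProduct_smul, smul_eq_mul]
    field_simp
  have hle : η ≤ -(u ⬝ᵥ A *ᵥ u) / ‖x‖ ^ 2 :=
    hscale ▸ hmin _ (by simp [norm_smul, hx])
  rw [le_div_iff₀ (by positivity), hnorm] at hle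
  linarith

lemma mulVec_add_eq_mulVec_sub {R : Type*} [CommRing R] [DecidableEq n] {A : Matrix n n R}
    (hA : IsUnit A) (b w : n → R) : A *ᵥ w + b = A *ᵥ (w - -(A⁻¹ *ᵥ b)) := by
  rw [sub_neg_eq_add, mulVec_add, mulVec_mulVec,
    mul_nonsing_inv A ((isUnit_iff_isUnit_det A).1 hA), one_mulVec]

end NegDef

lemma two_mul_abs_dotProduct_mulVec_le {R m n : Type*} [CommRing R] [LinearOrder R]
    [IsStrictOrderedRing R] [Fintype m] [Fintype n] {M : Matrix m n R} (hM : ∀ i j, 0 ≤ M i j)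
    (u : m → R) (v : n → R) :
    2 * |u ⬝ᵥ M *ᵥ v| ≤ (M *ᵥ 1) ⬝ᵥ u ^ 2 + (1 ᵥ* M) ⬝ᵥ v ^ 2 := by
  have hrow : (M *ᵥ 1) ⬝ᵥ u ^ 2 = ∑ i, ∑ j, M i j * u i ^ 2 := by
    simp [dotProduct, mulVec, sum_mul]
  have hcol : (1 ᵥ* M) ⬝ᵥ v ^ 2 = ∑ i, ∑ j, M i j * v j ^ 2 := by
    rw [sum_comm]
    simp [dotProduct, vecMul, sum_mul]
  have hentry (i : m) (j : n) :
      2 * |u i * (M i j * v j)| ≤ M i j * u i ^ 2 + M i j * v j ^ 2 :=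
    calc 2 * |u i * (M i j * v j)| = M i j * (2 * |u i| * |v j|) := by
          rw [abs_mul, abs_mul, abs_of_nonneg (hM i j)]; ring
      _ ≤ M i j * (|u i| ^ 2 + |v j| ^ 2) :=
          mul_le_mul_of_nonneg_left (two_mul_le_add_sq _ _) (hM i j)
      _ = M i j * u i ^ 2 + M i j * v j ^ 2 := by rw [sq_abs, sq_abs, mul_add]
  calc 2 * |u ⬝ᵥ M *ᵥ v| = 2 * |∑ i, ∑ j, u i * (M i j * v j)| := by
        simp only [dotProduct, mulVec, mul_sum]
    _ ≤ 2 * ∑ i, ∑ j, |u i * (M i j * v j)| := by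
        gcongr
        exact (abs_sum_le_sum_abs _ _).trans (sum_le_sum fun i _ => abs_sum_le_sum_abs _ _)
    _ ≤ ∑ i, ∑ j, (M i j * u i ^ 2 + M i j * v j ^ 2) := by
        simp only [mul_sum]
        gcongr with i _ j _
        exact hentry i j
    _ = (M *ᵥ 1) ⬝ᵥ u ^ 2 + (1 ᵥ* M) ⬝ᵥ v ^ 2 := by
        simp only [sum_add_distrib, hrow, hcol]

section TemporalDifference

variable {R S n : Type*} [Fintype S] [DecidableEq S]

/-- The matrix `Xᵀ D (γ P - I) X`, with `D = diag d`, of linear temporal-difference learning: the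
mean TD update at the weights `w` is `tdMatrix P d X γ *ᵥ w + b`, where `b = Xᵀ D r`. -/
def tdMatrix [CommRing R] (P : Matrix S S R) (d : S → R) (X : Matrix S n R) (γ : R) :
    Matrix n n R :=
  Xᵀ * diagonal d * (γ • P - 1) * X

variable [Fintype n] {P : Matrix S S R} {d : S → R}

lemma dotProduct_tdMatrix_mulVec [CommRing R] (X : Matrix S n R) (γ : R) (u : n → R) :
    u ⬝ᵥ tdMatrix P d X γ *ᵥ u =
      γ * ((X *ᵥ u) ⬝ᵥ (diagonal d * P) *ᵥ (X *ᵥ u)) - d ⬝ᵥ (X *ᵥ u) ^ 2 := by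
  have hsq : (X *ᵥ u) ⬝ᵥ diagonal d *ᵥ (X *ᵥ u) = d ⬝ᵥ (X *ᵥ u) ^ 2 := by
    simp only [dotProduct, mulVec_diagonal, Pi.pow_apply]
    exact sum_congr rfl fun s _ => by ring
  have hmat : tdMatrix P d X γ = Xᵀ * ((γ • (diagonal d * P) - diagonal d) * X) := by
    rw [tdMatrix, Matrix.mul_assoc Xᵀ, Matrix.mul_sub, Matrix.mul_smul, Matrix.mul_one,
      Matrix.mul_assoc]
  rw [hmat, ← mulVec_mulVec, ← mulVec_mulVec, dotProduct_mulVec, vecMul_transpose,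
    sub_mulVec, smul_mulVec, dotProduct_sub, dotProduct_smul, smul_eq_mul, hsq]

variable [CommRing R] [LinearOrder R] [IsStrictOrderedRing R]

lemma abs_dotProduct_diagonal_mul_mulVec_le (hP : ∀ i j, 0 ≤ P i j) (hP1 : P *ᵥ 1 ≤ 1)
    (hd : 0 ≤ d) (hdP : d ᵥ* P ≤ d) (v : S → R) :
    |v ⬝ᵥ (diagonal d * P) *ᵥ v| ≤ d ⬝ᵥ v ^ 2 := by
  have hrow : (diagonal d * P) *ᵥ 1 ≤ d := fun i => by
    rw [← mulVec_mulVec, mulVec_diagonal]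
    exact mul_le_of_le_one_right (hd i) (hP1 i)
  have hcol : 1 ᵥ* (diagonal d * P) ≤ d := by
    rwa [← vecMul_vecMul, show 1 ᵥ* diagonal d = d by ext; simp [vecMul_diagonal]]
  have hv : 0 ≤ v ^ 2 := fun i => sq_nonneg (v i)
  have hschur := two_mul_abs_dotProduct_mulVec_le (M := diagonal d * P)
    (fun i j => by rw [diagonal_mul]; exact mul_nonneg (hd i) (hP i j)) v v
  linarith [dotProduct_le_dotProduct_of_nonneg_right hrow hv,
    dotProduct_le_dotProduct_of_nonneg_right hcol hv]

lemma isNegDef_tdMatrix (hP : ∀ i j, 0 ≤ P i j) (hP1 : P *ᵥ 1 ≤ 1) (hd : ∀ s, 0 < d s)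
    (hdP : d ᵥ* P ≤ d) {X : Matrix S n R} (hX : Function.Injective X.mulVec) {γ : R}
    (hγ : |γ| < 1) : IsNegDef (tdMatrix P d X γ) := by
  intro u hu
  set v := X *ᵥ u
  have hv0 : v ≠ 0 := fun h => hu (hX (h.trans (mulVec_zero X).symm))
  have hpos : 0 < d ⬝ᵥ v ^ 2 := by
    obtain ⟨s, hs⟩ := Function.ne_iff.1 hv0
    exact sum_pos' (fun t _ => mul_nonneg (hd t).le (sq_nonneg (v t)))
      ⟨s, mem_univ s, mul_pos (hd s) (sq_pos_of_ne_zero hs)⟩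
  calc u ⬝ᵥ tdMatrix P d X γ *ᵥ u = γ * (v ⬝ᵥ (diagonal d * P) *ᵥ v) - d ⬝ᵥ v ^ 2 :=
        dotProduct_tdMatrix_mulVec X γ u
    _ ≤ |γ| * |v ⬝ᵥ (diagonal d * P) *ᵥ v| - d ⬝ᵥ v ^ 2 := by
        rw [← abs_mul]; gcongr; exact le_abs_self _
    _ ≤ |γ| * (d ⬝ᵥ v ^ 2) - d ⬝ᵥ v ^ 2 := by
        gcongr; exact abs_dotProduct_diagonal_mul_mulVec_le hP hP1 (fun s => (hd s).le) hdP v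
    _ < 0 := sub_neg.2 (mul_lt_of_lt_one_left hpos hγ)

end TemporalDifference

theorem linear_td_lyapunov_drift_general {S n : Type*} [Fintype S] [DecidableEq S] [Fintype n]
    [DecidableEq n] {P : Matrix S S ℝ} (hP : ∀ i j, 0 ≤ P i j) (hP1 : P *ᵥ 1 ≤ 1)
    {d : S → ℝ} (hd : ∀ s, 0 < d s) (hdP : d ᵥ* P ≤ d)
    {X : Matrix S n ℝ} (hX : Function.Injective X.mulVec) {γ : ℝ} (hγ : |γ| < 1)
    {A : Matrix n n ℝ} (hA : A = tdMatrix P d X γ)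
    {b wstar : n → ℝ} (hwstar : wstar = -(A⁻¹ *ᵥ b))
    {f : (n → ℝ) → (n → ℝ)} (hf : f = fun w => A *ᵥ w + b + w) :
    ∃ η > (0 : ℝ), ∀ w : n → ℝ,
      (w - wstar) ⬝ᵥ (f w - w) = (w - wstar) ⬝ᵥ A *ᵥ (w - wstar) ∧
      (w - wstar) ⬝ᵥ A *ᵥ (w - wstar) ≤ -η * ((w - wstar) ⬝ᵥ (w - wstar)) := by
  have hneg : IsNegDef A := hA ▸ isNegDef_tdMatrix hP hP1 hd hdP hX hγ
  obtain ⟨η, hη, hle⟩ := hneg.exists_dotProduct_mulVec_le_neg_mul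
  refine ⟨η, hη, fun w => ⟨?_, hle (w - wstar)⟩⟩
  rw [hf, add_sub_cancel_right, mulVec_add_eq_mulVec_sub hneg.isUnit b w, ← hwstar]

/-- With `A = Xᵀ D_π (γ P_π − I) X`, `b = Xᵀ D_π r_π`, `w* = −A⁻¹ b` and
`f(w) = A w + b + w`, the Lyapunov drift condition holds for `φ(x) = ½‖x‖₂²`:
`⟨∇(½‖w − w*‖₂²), f(w) − w⟩ = ⟨w − w*, A (w − w*)⟩ ≤ −η ‖w − w*‖₂²`. -/
theorem linear_td_lyapunov_drift
    {S : Type*} [Fintype S] [Nonempty S] [DecidableEq S] {K : ℕ}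
    (P : Matrix S S ℝ)
    (hnonneg : ∀ i j, 0 ≤ P i j)
    (hrowsum : ∀ i, ∑ j, P i j = 1)
    (hirr : ∀ i j, ∃ n : ℕ, 0 < (P ^ n) i j)
    (haper : ∀ i, ∀ e : ℕ, (∀ n ∈ returnTimes P i, e ∣ n) → e = 1)
    (d : S → ℝ) (hdnonneg : ∀ s, 0 ≤ d s) (hdsum : ∑ s, d s = 1)
    (hdstat : ∀ j, ∑ i, d i * P i j = d j)
    (X : Matrix S (Fin K) ℝ) (hX : Function.Injective X.mulVec)
    (r : S → ℝ)
    (γ : ℝ) (hγ0 : 0 ≤ γ) (hγ1 : γ < 1)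
    (A : Matrix (Fin K) (Fin K) ℝ)
    (hA : A = Xᵀ * Matrix.diagonal d * (γ • P - 1) * X)
    (b : Fin K → ℝ) (hb : b = (Xᵀ * Matrix.diagonal d).mulVec r)
    (wstar : Fin K → ℝ) (hwstar : wstar = -(A⁻¹.mulVec b))
    (f : (Fin K → ℝ) → (Fin K → ℝ)) (hf : f = fun w => A.mulVec w + b + w) :
    ∃ η > (0 : ℝ), ∀ w : Fin K → ℝ,
      (w - wstar) ⬝ᵥ (f w - w) = (w - wstar) ⬝ᵥ A.mulVec (w - wstar) ∧
      (w - wstar) ⬝ᵥ A.mulVec (w - wstar) ≤ -η * ((w - wstar) ⬝ᵥ (w - wstar)) := by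
  have hdP : d ᵥ* P = d := funext hdstat
  have hd0 : d ≠ 0 := by rintro rfl; simp at hdsum
  have hP1 : P *ᵥ 1 = 1 := (mem_rowStochastic_iff_sum.2 ⟨hnonneg, hrowsum⟩).2
  exact linear_td_lyapunov_drift_general hnonneg hP1.le
    (pos_of_vecMul_le hnonneg hirr hdnonneg hd0 hdP.le) hdP.le hX (abs_lt.2 ⟨by linarith, hγ1⟩)
    hA hwstar hf
end
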